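/- Let f : ℝⁿ → ℝ be differentiable with ‖∇f(θ) - ∇f(θ')‖ ≤ L‖θ - θ'‖ and ‖∇f(θ)‖ ≤ B for all θ, θ' and constants L, B > 0. Fix δ > 0, Δt > 0, and points θ, θ' ∈ ℝⁿ (with θ' playing the role of θ(t−Δt) and θ of θ(t)). Define the difference quotient âᵢ = (∂f/∂θᵢ(θ) − ∂f/∂θᵢ(θ'))/Δt and Ẑᵢᵢ⁻¹ = max{ √(max{ −δ⁻¹ · ∂f/∂θᵢ(θ) · âᵢ , 0 }) , 1 }. Then Ẑᵢᵢ⁻¹ ≥ 1 for every i, and Σᵢ Ẑᵢᵢ⁻¹ ≤ δ⁻¹ (Δt)⁻¹ B L ‖θ' − θ‖ + n. -/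

import Mathlib

/-!
Since `max (√y) 1 ≤ y + 1` for `0 ≤ y`, each entry of the scaling matrix is at most one plus the
absolute value of the quantity under the root. Up to the factor `δ⁻¹ (Δt)⁻¹` these absolute values
are the products `|gᵢ| |gᵢ - g'ᵢ|`, where `g` and `g'` are the gradients at the two points, and by
Cauchy-Schwarz the products sum to at most `‖g‖ ‖g - g'‖`.
-/

theorem sqrt_le_max_self_one (y : ℝ) : √y ≤ max y 1 :=
  Real.sqrt_le_iff.2 ⟨zero_le_one.trans (le_max_right y 1),
    (le_max_left y 1).trans (le_self_pow₀ (le_max_right y 1) two_ne_zero)⟩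

theorem max_sqrt_one_le_add_one {y : ℝ} (hy : 0 ≤ y) : max (√y) 1 ≤ y + 1 :=
  calc max (√y) 1
      ≤ max y 1 := max_le (sqrt_le_max_self_one y) (le_max_right y 1)
    _ ≤ y + 1 := max_le_add_of_nonneg hy zero_le_one

section

variable {ι : Type*}

/-- The diagonal entry `Ẑᵢᵢ⁻¹` of the approximate scaling matrix, for arbitrary vectors `g` and
`g'` in the roles of the gradients `∇f(θ)` and `∇f(θ')`. -/
noncomputable def zinvApprox (δ Δt : ℝ) (g g' : EuclideanSpace ℝ ι) (i : ι) : ℝ :=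
  max (√(max (-(δ⁻¹ * (g i * ((g i - g' i) / Δt)))) 0)) 1

theorem one_le_zinvApprox (δ Δt : ℝ) (g g' : EuclideanSpace ℝ ι) (i : ι) :
    1 ≤ zinvApprox δ Δt g g' i :=
  le_max_right _ _

theorem zinvApprox_le (δ Δt : ℝ) (g g' : EuclideanSpace ℝ ι) (i : ι) :
    zinvApprox δ Δt g g' i ≤ |δ|⁻¹ * |Δt|⁻¹ * (‖g i‖ * ‖(g - g') i‖) + 1 := by
  set x := -(δ⁻¹ * (g i * ((g i - g' i) / Δt))) with hx
  calc zinvApprox δ Δt g g' i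
      ≤ max x 0 + 1 := max_sqrt_one_le_add_one (le_max_right x 0)
    _ ≤ |x| + 1 := by
        gcongr
        exact max_le (le_abs_self x) (abs_nonneg x)
    _ = |δ|⁻¹ * |Δt|⁻¹ * (‖g i‖ * ‖(g - g') i‖) + 1 := by
        simp only [hx, abs_neg, abs_mul, abs_div, abs_inv, Real.norm_eq_abs, PiLp.sub_apply]
        ring

variable [Fintype ι]

theorem sum_norm_mul_norm_le_norm_mul_norm {β : ι → Type*} [∀ i, SeminormedAddCommGroup (β i)]
    (x y : PiLp 2 β) : ∑ i, ‖x i‖ * ‖y i‖ ≤ ‖x‖ * ‖y‖ := by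
  rw [PiLp.norm_eq_of_L2, PiLp.norm_eq_of_L2]
  exact Real.sum_mul_le_sqrt_mul_sqrt _ _ _

theorem sum_zinvApprox_le (δ Δt : ℝ) (g g' : EuclideanSpace ℝ ι) :
    ∑ i, zinvApprox δ Δt g g' i ≤ |δ|⁻¹ * |Δt|⁻¹ * (‖g‖ * ‖g - g'‖) + Fintype.card ι :=
  calc ∑ i, zinvApprox δ Δt g g' i
      ≤ ∑ i, (|δ|⁻¹ * |Δt|⁻¹ * (‖g i‖ * ‖(g - g') i‖) + 1) :=
        Finset.sum_le_sum fun i _ ↦ zinvApprox_le δ Δt g g' i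
    _ = |δ|⁻¹ * |Δt|⁻¹ * ∑ i, ‖g i‖ * ‖(g - g') i‖ + Fintype.card ι := by
        simp [Finset.sum_add_distrib, Finset.mul_sum]
    _ ≤ |δ|⁻¹ * |Δt|⁻¹ * (‖g‖ * ‖g - g'‖) + Fintype.card ι := by
        gcongr
        exact sum_norm_mul_norm_le_norm_mul_norm g (g - g')

theorem ZinvApprox_bounded_general {E : Type*} [SeminormedAddCommGroup E]
    (G : E → EuclideanSpace ℝ ι) {L B δ Δt : ℝ} (hδ : 0 < δ) (hΔt : 0 < Δt) {θ θ' : E}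
    (hlip : ‖G θ - G θ'‖ ≤ L * ‖θ - θ'‖) (hbdd : ‖G θ‖ ≤ B) :
    (∀ i, 1 ≤ zinvApprox δ Δt (G θ) (G θ') i) ∧
      ∑ i, zinvApprox δ Δt (G θ) (G θ') i ≤
        δ⁻¹ * Δt⁻¹ * B * L * ‖θ' - θ‖ + Fintype.card ι := by
  refine ⟨one_le_zinvApprox δ Δt (G θ) (G θ'), ?_⟩
  have norm_mul_norm_le : ‖G θ‖ * ‖G θ - G θ'‖ ≤ B * (L * ‖θ - θ'‖) :=
    mul_le_mul hbdd hlip (norm_nonneg _) ((norm_nonneg _).trans hbdd)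
  calc ∑ i, zinvApprox δ Δt (G θ) (G θ') i
      ≤ δ⁻¹ * Δt⁻¹ * (‖G θ‖ * ‖G θ - G θ'‖) + Fintype.card ι := by
        simpa only [abs_of_pos hδ, abs_of_pos hΔt] using sum_zinvApprox_le δ Δt (G θ) (G θ')
    _ ≤ δ⁻¹ * Δt⁻¹ * (B * (L * ‖θ - θ'‖)) + Fintype.card ι := by gcongr
    _ = δ⁻¹ * Δt⁻¹ * B * L * ‖θ' - θ‖ + Fintype.card ι := by
        rw [norm_sub_rev θ θ']
        ring

end

/-- Boundedness of the first-order (approximate) scaling matrix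
`Ẑᵢᵢ⁻¹ = max{√(max{−δ⁻¹ ∂ᵢf(θ) âᵢ, 0}), 1}` built from the difference quotient
`âᵢ = (∂ᵢf(θ) − ∂ᵢf(θ'))/Δt`: each entry is at least `1` and the sum of the
entries is at most `δ⁻¹ (Δt)⁻¹ B L ‖θ' − θ‖ + n`. -/
theorem ZinvApprox_bounded
    (n : ℕ) (f : EuclideanSpace ℝ (Fin n) → ℝ)
    (L B δ Δt : ℝ) (hL : 0 < L) (hB : 0 < B) (hδ : 0 < δ) (hΔt : 0 < Δt)
    (hdiff : Differentiable ℝ f)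
    (hlip : ∀ x y, ‖gradient f x - gradient f y‖ ≤ L * ‖x - y‖)
    (hbdd : ∀ x, ‖gradient f x‖ ≤ B)
    (θ θ' : EuclideanSpace ℝ (Fin n)) :
    (∀ i : Fin n,
        1 ≤ max (Real.sqrt (max (-(δ⁻¹ *
              (gradient f θ i * ((gradient f θ i - gradient f θ' i) / Δt)))) 0)) 1) ∧
      (∑ i : Fin n,
          max (Real.sqrt (max (-(δ⁻¹ *
              (gradient f θ i * ((gradient f θ i - gradient f θ' i) / Δt)))) 0)) 1) ≤
        δ⁻¹ * Δt⁻¹ * B * L * ‖θ' - θ‖ + n := by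
  simpa only [zinvApprox, Fintype.card_fin] using
    ZinvApprox_bounded_general (gradient f) hδ hΔt (hlip θ θ') (hbdd θ)
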